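/- Let X be an infinite-dimensional reflexive real Banach space with topological dual X*, and let T : X → X* be a continuous potential operator. Assume that T is closed (it maps closed subsets of X to closed subsets of X*), that T is not monotone, that the functional J_T is sequentially weakly lower semicontinuous, and that J_T + φ is coercive for every φ ∈ X*. Then the image T(S_T) of the set of singular points of T is not σ-compact. -/

import Mathlib

open Filter Topology Set NormedSpace

/-- `T` is a local homeomorphism at `x₀`: there are a neighbourhood `U` of `x₀` and a
neighbourhood `V` of `T x₀` such that the restriction of `T` to `U` is a homeomorphism
between `U` and `V`. -/
def IsLocalHomeoAt {Z W : Type*} [TopologicalSpace Z] [TopologicalSpace W]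
    (T : Z → W) (x₀ : Z) : Prop :=
  ∃ U ∈ 𝓝 x₀, ∃ V ∈ 𝓝 (T x₀), ∃ h : U ≃ₜ V, ∀ u : U, (h u : W) = T u

/-!
A closed nonconstant map on an infinite-dimensional Banach space is proper: by Vainstein's lemma its
fibers have compact boundary, and the complement of a compact set is connected. If `T(S_T)` were
σ-compact, then `T` would restrict to a covering of the complement of `T(S_T)`. In infinite
dimension a σ-compact set can be avoided by cones over compact sets, so that complement is simply
connected, and likewise `T⁻¹(T(S_T))` has a path-connected dense complement `D`. Hence `T` is
injective on `D`. For `y ∈ D` the functional `J_T - T(y)` has a minimizer, which solves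
`T(x) = T(y)` and so equals `y`: thus `J_T` lies above its tangent at `y`. By density this holds at
every point, and `T` is monotone.
-/

section SigmaCompact

variable {α β : Type*} [TopologicalSpace α] [TopologicalSpace β]

theorem isSigmaCompact_prod {s : Set α} {t : Set β} (hs : IsSigmaCompact s)
    (ht : IsSigmaCompact t) : IsSigmaCompact (s ×ˢ t) := by
  obtain ⟨k, hk, rfl⟩ := hs
  obtain ⟨l, hl, rfl⟩ := ht
  rw [← iUnion_prod]
  exact isSigmaCompact_iUnion_of_isCompact _ fun i => (hk i.1).prod (hl i.2)

theorem isSigmaCompact_preimage_of_isProperMap {f : α → β} (hf : IsProperMap f) {s : Set β}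
    (hs : IsSigmaCompact s) : IsSigmaCompact (f ⁻¹' s) := by
  obtain ⟨k, hk, rfl⟩ := hs
  rw [preimage_iUnion]
  exact isSigmaCompact_iUnion_of_isCompact _ fun n => hf.isCompact_preimage (hk n)

end SigmaCompact

section InfiniteDimensional

variable {E : Type*} [NormedAddCommGroup E] [NormedSpace ℝ E]

theorem not_finiteDimensional_strongDual (hE : ¬ FiniteDimensional ℝ E) :
    ¬ FiniteDimensional ℝ (StrongDual ℝ E) := fun _ =>
  hE <| FiniteDimensional.of_injective (inclusionInDoubleDualLi ℝ (E := E)).toLinearMap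
    (inclusionInDoubleDualLi ℝ (E := E)).injective

theorem interior_eq_empty_of_isCompact (hE : ¬ FiniteDimensional ℝ E) {K : Set E}
    (hK : IsCompact K) : interior K = ∅ := by
  by_contra hne
  obtain ⟨x, hx⟩ := nonempty_iff_ne_empty.mpr hne
  have : LocallyCompactSpace E :=
    hK.locallyCompactSpace_of_mem_nhds_of_addGroup (mem_interior_iff_mem_nhds.mp hx)
  exact hE (FiniteDimensional.of_locallyCompactSpace ℝ)

variable [CompleteSpace E]

theorem dense_compl_of_isSigmaCompact (hE : ¬ FiniteDimensional ℝ E) {K : Set E}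
    (hK : IsSigmaCompact K) : Dense Kᶜ := by
  obtain ⟨k, hk, rfl⟩ := hK
  rw [compl_iUnion]
  exact dense_iInter_of_isOpen (fun n => (hk n).isClosed.isOpen_compl) fun n =>
    interior_eq_empty_iff_dense_compl.mp (interior_eq_empty_of_isCompact hE (hk n))

/-- The points `p` to be avoided lie on a line through some `c ∈ C` and some `q ∈ K`, and these
lines sweep out only a σ-compact set. -/
theorem exists_forall_segment_subset_compl (hE : ¬ FiniteDimensional ℝ E) {K C : Set E}
    (hK : IsSigmaCompact K) (hC : IsSigmaCompact C) (hCK : C ⊆ Kᶜ) :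
    ∃ p, ∀ c ∈ C, segment ℝ p c ⊆ Kᶜ := by
  let lines : Set E := (fun x : ℝ × E × E => AffineMap.lineMap x.2.1 x.2.2 x.1) '' univ ×ˢ C ×ˢ K
  have hlines : IsSigmaCompact lines :=
    (isSigmaCompact_prod isSigmaCompact_univ (isSigmaCompact_prod hC hK)).image <| by
      simp only [AffineMap.lineMap_apply_module]
      fun_prop
  obtain ⟨p, hp⟩ := (dense_compl_of_isSigmaCompact hE hlines).nonempty
  refine ⟨p, fun c hc => ?_⟩
  rw [segment_symm, segment_eq_image_lineMap]
  rintro _ ⟨s, -, rfl⟩ hsK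
  obtain rfl | hs := eq_or_ne s 0
  · exact hCK hc (by simpa using hsK)
  · refine hp ⟨(s⁻¹, c, AffineMap.lineMap c p s), ⟨mem_univ _, hc, hsK⟩, ?_⟩
    simp [AffineMap.lineMap_apply, hs]

theorem isPathConnected_compl_of_isSigmaCompact (hE : ¬ FiniteDimensional ℝ E) {K : Set E}
    (hK : IsSigmaCompact K) : IsPathConnected Kᶜ := by
  refine isPathConnected_iff.mpr ⟨(dense_compl_of_isSigmaCompact hE hK).nonempty,
    fun x hx y hy => ?_⟩
  obtain ⟨p, hp⟩ := exists_forall_segment_subset_compl hE hK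
    (toFinite {x, y}).isCompact.isSigmaCompact (pair_subset hx hy)
  have hpx : JoinedIn Kᶜ p x := .of_segment_subset (hp x (by simp))
  have hpy : JoinedIn Kᶜ p y := .of_segment_subset (hp y (by simp))
  exact hpx.symm.trans hpy

/-- Every loop in `Kᶜ` lies in a star-shaped, hence contractible, subset of `Kᶜ`. -/
theorem isSimplyConnected_compl_of_isSigmaCompact (hE : ¬ FiniteDimensional ℝ E) {K : Set E}
    (hK : IsSigmaCompact K) : IsSimplyConnected Kᶜ := by
  refine isSimplyConnected_iff_exists_homotopy_refl_forall_mem.mpr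
    ⟨isPathConnected_compl_of_isSigmaCompact hE hK, fun x γ hγ => ?_⟩
  obtain ⟨p, hp⟩ := exists_forall_segment_subset_compl hE hK
    (isCompact_range γ.continuous).isSigmaCompact (range_subset_iff.mpr hγ)
  let cone : Set E := {c | segment ℝ p c ⊆ Kᶜ}
  have hγcone : ∀ t, γ t ∈ cone := fun t => hp _ (mem_range_self t)
  have hcone : StarConvex ℝ p cone := starConvex_iff_segment_subset.mpr fun c hc d hd =>
    ((convex_segment p c).segment_subset (left_mem_segment ℝ p c) hd).trans hc
  have := hcone.contractibleSpace ⟨_, hγcone 0⟩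
  have hsimply : IsSimplyConnected cone := SimplyConnectedSpace.ofContractible cone
  obtain ⟨F, hF⟩ :=
    (isSimplyConnected_iff_exists_homotopy_refl_forall_mem.mp hsimply).2 x γ hγcone
  exact ⟨F, fun t => hF t (right_mem_segment ℝ p _)⟩

theorem isCompact_of_isCompact_frontier (hE : ¬ FiniteDimensional ℝ E) {A : Set E}
    (hA : IsClosed A) (hfr : IsCompact (frontier A)) (hne : A ≠ univ) : IsCompact A := by
  suffices hint : interior A = ∅ by rwa [hA.frontier_eq, hint, sdiff_empty] at hfr
  by_contra hint
  obtain ⟨a, ha⟩ := nonempty_iff_ne_empty.mpr hint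
  obtain ⟨b, hb⟩ := (ne_univ_iff_exists_notMem A).mp hne
  have hpre : IsPreconnected (frontier A)ᶜ :=
    (isPathConnected_compl_of_isSigmaCompact hE hfr.isSigmaCompact).isConnected.isPreconnected
  obtain ⟨c, -, hc, hcA⟩ := hpre (interior A) Aᶜ isOpen_interior hA.isOpen_compl
    (fun x hx => by
      rw [hA.frontier_eq] at hx
      by_contra h
      simp_all)
    ⟨a, fun h => h.2 ha, ha⟩ ⟨b, fun h => hb (hA.frontier_subset h), hb⟩
  exact hcA (interior_subset hc)

end InfiniteDimensional

section ClosedMap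

theorem exists_mapClusterPt_of_isClosedMap {α β : Type*} [TopologicalSpace α]
    [TopologicalSpace β] [T1Space β] {f : α → β} (hf : Continuous f) (hcl : IsClosedMap f)
    {z : ℕ → α} {y : β} (hz : Tendsto (f ∘ z) atTop (𝓝 y)) (hne : ∀ n, f (z n) ≠ y) :
    ∃ a, MapClusterPt a atTop z := by
  obtain ⟨a, ha, rfl⟩ : y ∈ f '' closure (range z) :=
    (hcl _ isClosed_closure).mem_of_tendsto hz <| .of_forall fun n =>
      mem_image_of_mem f (subset_closure (mem_range_self n))
  refine ⟨a, mapClusterPt_atTop_iff_forall_mem_closure.mpr fun N => ?_⟩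
  have hfin : IsClosed (f ⁻¹' (f ∘ z '' Iio N)) := ((finite_Iio N).image _).isClosed.preimage hf
  have hhead : a ∉ closure (z '' Iio N) := fun h => by
    have hsub : z '' Iio N ⊆ f ⁻¹' (f ∘ z '' Iio N) := by
      rintro _ ⟨n, hn, rfl⟩
      exact ⟨n, hn, rfl⟩
    obtain ⟨n, -, hn⟩ := closure_minimal hsub hfin h
    exact hne n hn
  rw [← image_univ, ← Iio_union_Ici (a := N), image_union, closure_union] at ha
  exact ha.resolve_left hhead

/-- **Vainstein's lemma.** -/
theorem isCompact_frontier_fiber_of_isClosedMap {α β : Type*} [PseudoMetricSpace α]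
    [TopologicalSpace β] [T1Space β] [FirstCountableTopology β] {f : α → β} (hf : Continuous f)
    (hcl : IsClosedMap f) (y : β) : IsCompact (frontier (f ⁻¹' {y})) := by
  refine IsSeqCompact.isCompact fun x hx => ?_
  obtain ⟨V, hV⟩ := (𝓝 y).exists_antitone_basis
  have hε : ∀ n : ℕ, 0 < 1 / ((n : ℝ) + 1) := fun n => by positivity
  have hnear : ∀ n, ∃ z, dist z (x n) < 1 / ((n : ℝ) + 1) ∧ f z ∈ V n ∧ f z ≠ y := fun n => by
    have hxy : f (x n) = y := (isClosed_singleton.preimage hf).frontier_subset (hx n)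
    have hfV : f ⁻¹' V n ∈ 𝓝 (x n) := hf.continuousAt (hxy ▸ hV.mem n)
    obtain ⟨z, ⟨hzx, hzV⟩, hzy⟩ := mem_closure_iff_nhds.mp
      (frontier_eq_closure_inter_closure.subset (hx n)).2 _
      (inter_mem (Metric.ball_mem_nhds (x n) (hε n)) hfV)
    exact ⟨z, hzx, hzV, hzy⟩
  choose z hzx hzV hzy using hnear
  obtain ⟨a, ha⟩ := exists_mapClusterPt_of_isClosedMap hf hcl (hV.tendsto hzV) hzy
  obtain ⟨ψ, hψ, hlim⟩ := ha.tendsto_subseq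
  have hdist : Tendsto (fun n => dist (z (ψ n)) (x (ψ n))) atTop (𝓝 0) :=
    squeeze_zero (fun _ => dist_nonneg) (fun n => (hzx (ψ n)).le)
      (tendsto_one_div_add_atTop_nhds_zero_nat.comp hψ.tendsto_atTop)
  have hxlim : Tendsto (x ∘ ψ) atTop (𝓝 a) := (tendsto_iff_of_dist hdist).mp hlim
  exact ⟨a, isClosed_frontier.mem_of_tendsto hxlim (.of_forall fun n => hx _), ψ, hψ, hxlim⟩

theorem isProperMap_of_isClosedMap {E β : Type*} [NormedAddCommGroup E] [NormedSpace ℝ E]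
    [CompleteSpace E] [TopologicalSpace β] [T1Space β] [FirstCountableTopology β]
    (hE : ¬ FiniteDimensional ℝ E) {f : E → β} (hf : Continuous f) (hcl : IsClosedMap f)
    (hnonconst : ∀ y, ∃ x, f x ≠ y) : IsProperMap f := by
  refine isProperMap_iff_isClosedMap_and_compact_fibers.mpr ⟨hf, hcl, fun y => ?_⟩
  refine isCompact_of_isCompact_frontier hE (isClosed_singleton.preimage hf)
    (isCompact_frontier_fiber_of_isClosedMap hf hcl y) fun huniv => ?_
  obtain ⟨x, hx⟩ := hnonconst y
  exact hx (huniv ▸ mem_univ x : x ∈ f ⁻¹' {y})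

end ClosedMap

section SingularSet

variable {Z W : Type*} [TopologicalSpace Z] [TopologicalSpace W]

/-- The set `S_T` of singular points of `T`. -/
def singularSet (T : Z → W) : Set Z :=
  {x | ¬ IsLocalHomeoAt T x}

theorem isLocalHomeomorphOn_compl_singularSet (T : Z → W) :
    IsLocalHomeomorphOn T (singularSet T)ᶜ := by
  refine (isLocalHomeomorphOn_iff_isOpenEmbedding_restrict _).mpr fun x hx => ?_
  obtain ⟨U, hU, V, hV, h, hhT⟩ := not_not.mp hx
  have hTU : U.domRestrict T = Subtype.val ∘ h := funext fun u => (hhT u).symm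
  have hcont : ContinuousOn T U := by
    rw [continuousOn_iff_continuous_domRestrict, hTU]
    fun_prop
  have hinj : InjOn T U := by
    rw [injOn_iff_injective, hTU]
    exact Subtype.val_injective.comp h.injective
  have hmap : ∀ y, U ∈ 𝓝 y → V ∈ 𝓝 (T y) → map T (𝓝 y) = 𝓝 (T y) := fun y hy hTy => by
    let u : U := ⟨y, mem_of_mem_nhds hy⟩
    calc map T (𝓝 y) = map (U.domRestrict T) (𝓝 u) := by
          rw [← map_nhds_subtype_coe_eq_nhds u.2 hy, map_map]; rfl
      _ = map Subtype.val (𝓝 (h u)) := by rw [hTU, ← map_map, h.map_nhds_eq]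
      _ = 𝓝 (T y) := by
          rw [← hhT u] at hTy ⊢
          exact map_nhds_subtype_coe_eq_nhds (h u).2 hTy
  let O := interior U ∩ T ⁻¹' interior V
  have hOU : O ⊆ U := inter_subset_left.trans interior_subset
  have hO : IsOpen O :=
    (hcont.mono interior_subset).isOpen_inter_preimage isOpen_interior isOpen_interior
  refine ⟨O, hO.mem_nhds ⟨mem_interior_iff_mem_nhds.mpr hU, mem_interior_iff_mem_nhds.mpr hV⟩,
    .of_continuous_injective_isOpenMap (hcont.mono hOU).domRestrict
      (hinj.mono hOU).injective (isOpenMap_iff_nhds_le.mpr fun y => ?_)⟩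
  have hval : map Subtype.val (𝓝 y) = 𝓝 (y : Z) :=
    map_nhds_subtype_coe_eq_nhds y.2 (hO.mem_nhds y.2)
  change 𝓝 (T y) ≤ map (T ∘ Subtype.val) (𝓝 y)
  rw [← map_map, hval, hmap y (mem_interior_iff_mem_nhds.mp y.2.1)
    (mem_interior_iff_mem_nhds.mp y.2.2)]

theorem isCoveringMapOn_compl_image_singularSet [T2Space Z] {T : Z → W}
    (hT : IsProperMap T) : IsCoveringMapOn T (T '' singularSet T)ᶜ := by
  have hloc : IsLocalHomeomorphOn T (T ⁻¹' (T '' singularSet T)ᶜ) :=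
    (isLocalHomeomorphOn_compl_singularSet T).mono fun x hx hxS => hx (mem_image_of_mem T hxS)
  refine hT.isClosedMap.isCoveringMapOn_of_isLocalHomeomorphOn (fun y hy => ?_) hloc
  have hdisc : IsDiscrete (T ⁻¹' {y}) :=
    (hloc.mono (preimage_mono (singleton_subset_iff.mpr hy))).isDiscrete_of_image
      ((subsingleton_singleton.anti (image_preimage_subset T {y})).isDiscrete)
  exact (hT.isCompact_preimage isCompact_singleton).finite hdisc

theorem injective_of_isCoveringMap [PathConnectedSpace Z] [SimplyConnectedSpace W] {p : Z → W}
    (hp : IsCoveringMap p) : Function.Injective p := fun x y hxy => by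
  have hmon : hp.monodromy (.refl (p x)) ⟨x, rfl⟩ = ⟨y, hxy.symm⟩ :=
    hp.monodromy_eq_of_map_eq (.mk (PathConnectedSpace.somePath x y)) (Subsingleton.elim _ _)
  rw [hp.monodromy_refl] at hmon
  exact congrArg Subtype.val hmon

end SingularSet

theorem injOn_compl_preimage_image_singularSet {E F : Type*} [NormedAddCommGroup E]
    [NormedSpace ℝ E] [CompleteSpace E] [NormedAddCommGroup F] [NormedSpace ℝ F]
    [CompleteSpace F] (hE : ¬ FiniteDimensional ℝ E) (hF : ¬ FiniteDimensional ℝ F) {T : E → F}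
    (hT : IsProperMap T) (hK : IsSigmaCompact (T '' singularSet T)) :
    InjOn T (T ⁻¹' (T '' singularSet T))ᶜ := by
  let R : Set F := (T '' singularSet T)ᶜ
  have : PathConnectedSpace (T ⁻¹' R) := isPathConnected_iff_pathConnectedSpace.mp <|
    isPathConnected_compl_of_isSigmaCompact hE (isSigmaCompact_preimage_of_isProperMap hT hK)
  have : SimplyConnectedSpace R :=
    (isSimplyConnected_compl_of_isSigmaCompact hF hK).simplyConnectedSpace
  have hinj : Function.Injective (R.restrictPreimage T) := injective_of_isCoveringMap
    (isCoveringMapOn_compl_image_singularSet hT).isCoveringMap_restrictPreimage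
  intro x hx y hy hxy
  exact congrArg Subtype.val (@hinj ⟨x, hx⟩ ⟨y, hy⟩ (Subtype.ext hxy))

section WeakTopology

section RCLike

variable {𝕜 X : Type*} [RCLike 𝕜] [NormedAddCommGroup X] [NormedSpace 𝕜 X]

theorem continuous_strongDual_toWeakSpace_symm (φ : StrongDual 𝕜 X) :
    Continuous fun x : WeakSpace 𝕜 X => φ ((toWeakSpace 𝕜 X).symm x) :=
  WeakBilin.eval_continuous (topDualPairing 𝕜 X).flip φ

theorem exists_seq_strongDual_separating {s : Set X} (hs : TopologicalSpace.IsSeparable s) :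
    ∃ f : ℕ → StrongDual 𝕜 X, ∀ x ∈ s, (∀ n, f n x = 0) → x = 0 := by
  obtain ⟨c, hc, hsc⟩ := hs
  obtain rfl | hne := c.eq_empty_or_nonempty
  · exact ⟨0, fun x hx => by simpa using hsc hx⟩
  obtain ⟨d, rfl⟩ := hc.exists_eq_range hne
  choose f hf_norm hf_apply using fun n => exists_dual_vector'' 𝕜 (d n)
  refine ⟨f, fun x hx hfx => norm_le_zero_iff.mp (le_of_forall_pos_lt_add fun ε hε => ?_)⟩
  obtain ⟨_, ⟨n, rfl⟩, hn⟩ := Metric.mem_closure_iff.mp (hsc hx) (ε / 2) (by positivity)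
  rw [dist_eq_norm'] at hn
  have hdn : ‖d n‖ ≤ ‖d n - x‖ := calc
    ‖d n‖ = ‖f n (d n - x)‖ := by simp [hfx n, hf_apply n]
    _ ≤ ‖d n - x‖ := by simpa using (f n).le_of_opNorm_le (hf_norm n) (d n - x)
  have hx : ‖x‖ ≤ ‖d n‖ + ‖d n - x‖ := by simpa using norm_sub_le (d n) (d n - x)
  linarith

/-- The closed span `Z` of the sequence is separable, so a sequence of functionals makes `K ∩ Z`
metrizable. -/
theorem isSeqCompact_of_isCompact_weakSpace {K : Set (WeakSpace 𝕜 X)} (hK : IsCompact K) :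
    IsSeqCompact K := by
  intro u hu
  let ι : X ≃ₗ[𝕜] WeakSpace 𝕜 X := toWeakSpace 𝕜 X
  let Z : Submodule 𝕜 X := (Submodule.span 𝕜 (range (ι.symm ∘ u))).topologicalClosure
  have hZsep : TopologicalSpace.IsSeparable (Z : Set X) :=
    ((countable_range (ι.symm ∘ u)).isSeparable.span (R := 𝕜)).closure
  have hZclosed : IsClosed (ι.symm ⁻¹' (Z : Set X)) := by
    let _ : NormedSpace ℝ X := .restrictScalars ℝ 𝕜 X
    have : IsScalarTower ℝ 𝕜 X := .restrictScalars ℝ 𝕜 X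
    have hZconv : Convex ℝ (Z : Set X) := (Z.restrictScalars ℝ).convex
    rw [← LinearEquiv.image_eq_preimage_symm, ← closure_eq_iff_isClosed,
      ← hZconv.toWeakSpace_closure 𝕜, (Submodule.isClosed_topologicalClosure _).closure_eq]
  have huZ : ∀ n, ι.symm (u n) ∈ Z := fun n =>
    Submodule.le_topologicalClosure _ (Submodule.subset_span ⟨n, rfl⟩)
  obtain ⟨f, hf⟩ := exists_seq_strongDual_separating (𝕜 := 𝕜) hZsep
  let L : Set (WeakSpace 𝕜 X) := K ∩ ι.symm ⁻¹' (Z : Set X)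
  have : CompactSpace L := isCompact_iff_compactSpace.mp (hK.inter_right hZclosed)
  have : TopologicalSpace.MetrizableSpace L := by
    refine Metric.PiNatEmbed.TopologicalSpace.MetrizableSpace.of_countable_separating
      (fun n (x : L) => f n (ι.symm x))
      (fun n => (continuous_strongDual_toWeakSpace_symm (f n)).comp continuous_subtype_val)
      fun x y hxy => ?_
    by_contra! hfxy
    refine hxy (Subtype.ext (ι.symm.injective (sub_eq_zero.mp
      (hf _ (Z.sub_mem x.2.2 y.2.2) fun n => ?_))))
    rw [map_sub, hfxy n, sub_self]
  obtain ⟨a, ψ, hψ, hlim⟩ := CompactSpace.tendsto_subseq fun n => (⟨u n, hu n, huZ n⟩ : L)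
  exact ⟨a, a.2.1, ψ, hψ, (continuous_subtype_val.tendsto a).comp hlim⟩

theorem isCompact_image_toWeakSpace_closedBall
    (hrefl : Function.Surjective (inclusionInDoubleDual 𝕜 X)) (x : X) (r : ℝ) :
    IsCompact (toWeakSpace 𝕜 X '' Metric.closedBall x r) := by
  have hsurj : Function.Surjective (inclusionInDoubleDualWeak 𝕜 X) := hrefl
  have hball : toWeakSpace 𝕜 X '' Metric.closedBall x r = inclusionInDoubleDualWeak 𝕜 X ⁻¹'
      (WeakDual.toStrongDual ⁻¹' Metric.closedBall (inclusionInDoubleDual 𝕜 X x) r) := by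
    rw [(toWeakSpace 𝕜 X).image_eq_preimage_symm]
    exact ((inclusionInDoubleDualLi 𝕜 (E := X)).isometry.preimage_closedBall x r).symm
  rw [hball]
  exact (isEmbedding_inclusionInDoubleDualWeak 𝕜 X).isCompact_preimage'
    (WeakDual.isCompact_closedBall _ _) (hsurj.range_eq ▸ subset_univ _)

end RCLike

/-- Sequential lower semicontinuity of a real-valued function, phrased with strict lower bounds
`b < f x` instead of `liminf`, whose value on an unbounded real sequence is junk. On `WeakSpace ℝ X`
it is sequential weak lower semicontinuity. -/
def SeqLowerSemicontinuous {α : Type*} [TopologicalSpace α] (f : α → ℝ) : Prop :=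
  ∀ (u : ℕ → α) (x : α), Tendsto u atTop (𝓝 x) → ∀ b < f x, ∀ᶠ n in atTop, b < f (u n)

namespace SeqLowerSemicontinuous

variable {α : Type*} [TopologicalSpace α] {f g : α → ℝ}

theorem sub_continuous (hf : SeqLowerSemicontinuous f) (hg : Continuous g) :
    SeqLowerSemicontinuous fun x => f x - g x := by
  intro u x hu b hb
  obtain ⟨c, hbc, hcf⟩ := exists_between (lt_sub_iff_add_lt.mp hb)
  have hgu : Tendsto (g ∘ u) atTop (𝓝 (g x)) := (hg.tendsto x).comp hu
  filter_upwards [hf u x hu c hcf,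
    hgu.eventually (gt_mem_nhds (lt_sub_iff_add_lt'.mpr hbc))] with n hfn hgn
  simp only [Function.comp_apply] at hgn
  linarith

theorem exists_isMinOn (hf : SeqLowerSemicontinuous f) {K : Set α} (hK : IsSeqCompact K)
    (hne : K.Nonempty) : ∃ x ∈ K, IsMinOn f K x := by
  let S : Set EReal := (fun x => (f x : EReal)) '' K
  obtain ⟨v, -, hv, hvS⟩ := exists_seq_tendsto_sInf (hne.image _) (OrderBot.bddBelow S)
  choose u huK huv using hvS
  obtain ⟨x, hxK, ψ, hψ, hux⟩ := hK huK
  refine ⟨x, hxK, isMinOn_iff.mpr fun z hz => not_lt.mp fun hzx => ?_⟩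
  obtain ⟨b, hzb, hbx⟩ := exists_between hzx
  have hinf : Tendsto (fun n => (f (u (ψ n)) : EReal)) atTop (𝓝 (sInf S)) :=
    (hv.comp hψ.tendsto_atTop).congr fun n => (huv (ψ n)).symm
  have hbS : (b : EReal) ≤ sInf S := ge_of_tendsto hinf <|
    (hf _ x hux b hbx).mono fun n hn => EReal.coe_le_coe_iff.mpr hn.le
  exact hzb.not_ge (EReal.coe_le_coe_iff.mp (hbS.trans (sInf_le (mem_image_of_mem _ hz))))

end SeqLowerSemicontinuous

variable {X : Type*} [NormedAddCommGroup X] [NormedSpace ℝ X]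

theorem exists_forall_le_of_tendsto_cobounded
    (hrefl : Function.Surjective (inclusionInDoubleDual ℝ X)) {f : X → ℝ}
    (hf : SeqLowerSemicontinuous (f ∘ (toWeakSpace ℝ X).symm))
    (hcoer : Tendsto f (Bornology.cobounded X) atTop) : ∃ x, ∀ z, f x ≤ f z := by
  have hsub : Bornology.IsBounded {x | f x ≤ f 0} := by
    filter_upwards [hcoer.eventually_gt_atTop (f 0)] with x hx using hx.not_ge
  obtain ⟨r, hr⟩ := hsub.subset_closedBall 0
  obtain ⟨_, ⟨x, -, rfl⟩, hx⟩ := hf.exists_isMinOn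
    (isSeqCompact_of_isCompact_weakSpace (isCompact_image_toWeakSpace_closedBall hrefl 0 r))
    ⟨_, mem_image_of_mem _ (hr (le_refl (f 0)))⟩
  have hmin : ∀ z ∈ Metric.closedBall 0 r, f x ≤ f z := fun z hz => by
    simpa using hx (mem_image_of_mem _ hz)
  refine ⟨x, fun z => ?_⟩
  obtain hz | hz := le_total (f z) (f 0)
  · exact hmin z (hr hz)
  · exact (hmin 0 (hr (le_refl (f 0)))).trans hz

end WeakTopology

section PotentialOperator

variable {X : Type*} [NormedAddCommGroup X] [NormedSpace ℝ X] {J : X → ℝ} {T : X → StrongDual ℝ X}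

/-- At `y ∈ D` the minimizer of `J - T y` is a solution of `T x = T y`, hence `y` itself; both
sides of the inequality are continuous in `y`. -/
theorem sub_apply_le_sub_apply_of_dense (hT : Continuous T) (hJ : ∀ x, HasFDerivAt J (T x) x)
    (hmin : ∀ φ : StrongDual ℝ X, ∃ x, ∀ z, J x - φ x ≤ J z - φ z) {D : Set X} (hD : Dense D)
    (hinj : ∀ y ∈ D, ∀ x, T x = T y → x = y) (y z : X) : J y - T y y ≤ J z - T y z := by
  have hJc : Continuous J := continuous_iff_continuousAt.mpr fun x => (hJ x).continuousAt
  have hclosed : IsClosed {y | J y - T y y ≤ J z - T y z} :=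
    isClosed_le (by fun_prop) (by fun_prop)
  refine closure_minimal (fun y hy => ?_) hclosed (hD y)
  obtain ⟨x, hx⟩ := hmin (T y)
  have hcrit : T x - T y = 0 := IsLocalMin.hasFDerivAt_eq_zero (f := fun z => J z - T y z)
    (.of_forall hx) ((hJ x).sub (T y).hasFDerivAt)
  obtain rfl := hinj y hy x (sub_eq_zero.mp hcrit)
  exact hx z

theorem nonneg_of_sub_apply_le_sub_apply (h : ∀ y z, J y - T y y ≤ J z - T y z) (x y : X) :
    0 ≤ (T x - T y) (x - y) := by
  have hxy := h x y
  have hyx := h y x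
  simp only [sub_apply, map_sub]
  linarith

end PotentialOperator

/-- Theorem 1 (first part): if `X` is an infinite-dimensional reflexive real Banach space and
`T : X → X*` is a closed, non-monotone, continuous potential operator whose potential `J_T` is
sequentially weakly lower semicontinuous and such that `J_T + φ` is coercive for every
`φ ∈ X*`, then the set `S_T` of singular points of `T` is not σ-compact. -/
theorem image_of_singular_points_not_sigmaCompact
    {X : Type*} [NormedAddCommGroup X] [NormedSpace ℝ X] [CompleteSpace X]
    (hdim : ¬ FiniteDimensional ℝ X)
    (hrefl : Function.Surjective (inclusionInDoubleDual ℝ X))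
    (T : X → StrongDual ℝ X)
    (hTcont : Continuous T)
    (JT : X → ℝ)
    (hJT : JT = fun x => ∫ s in (0:ℝ)..1, T (s • x) x)
    (hpot : ∀ x : X, HasFDerivAt JT (T x) x)
    (hclosed : ∀ C : Set X, IsClosed C → IsClosed (T '' C))
    (hnmono : ¬ ∀ x y : X, 0 ≤ (T x - T y) (x - y))
    (hswlsc : ∀ (u : ℕ → X) (x : X),
      (∀ φ : StrongDual ℝ X, Tendsto (fun n => φ (u n)) atTop (𝓝 (φ x))) →
      ∀ b < JT x, ∀ᶠ n in atTop, b < JT (u n))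
    (hcoer : ∀ φ : StrongDual ℝ X,
      Tendsto (fun x => JT x + φ x) (comap (fun x : X => ‖x‖) atTop) atTop) :
    ¬ IsSigmaCompact (T '' {x : X | ¬ IsLocalHomeoAt T x}) := by
  intro hK
  have hnonconst : ∀ y, ∃ x, T x ≠ y := fun y => by
    by_contra! hconst
    exact hnmono fun a b => by simp [hconst a, hconst b]
  have hproper : IsProperMap T := isProperMap_of_isClosedMap hdim hTcont hclosed hnonconst
  have hinj : InjOn T (T ⁻¹' (T '' singularSet T))ᶜ := injOn_compl_preimage_image_singularSet
    hdim (not_finiteDimensional_strongDual hdim) hproper hK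
  have hdense : Dense (T ⁻¹' (T '' singularSet T))ᶜ :=
    dense_compl_of_isSigmaCompact hdim (isSigmaCompact_preimage_of_isProperMap hproper hK)
  have hlsc : SeqLowerSemicontinuous (JT ∘ (toWeakSpace ℝ X).symm) := fun u x hu =>
    hswlsc _ _ fun φ => ((continuous_strongDual_toWeakSpace_symm φ).tendsto x).comp hu
  have hmin : ∀ φ : StrongDual ℝ X, ∃ x, ∀ z, JT x - φ x ≤ JT z - φ z := fun φ =>
    exists_forall_le_of_tendsto_cobounded hrefl
      (hlsc.sub_continuous (continuous_strongDual_toWeakSpace_symm φ))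
      (by simpa [sub_eq_add_neg, comap_norm_atTop] using hcoer (-φ))
  refine hnmono (nonneg_of_sub_apply_le_sub_apply
    (sub_apply_le_sub_apply_of_dense hTcont hpot hmin hdense fun y hy x hxy => ?_))
  exact hinj (by rwa [mem_compl_iff, mem_preimage, hxy]) hy hxy
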